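/- Fix game parameters d, ρ₀, (β_i) as described, let 0 < δ ≤ d, let F ⊆ ℝ^d × (ℕ→ℕ) and let A = p[F] = {x ∈ ℝ^d : ∃y (x,y) ∈ F}. If player II has a winning strategy in the unfolded δ-Hausdorff dimension game for F, then for every s with δ < s ≤ d, player II has a winning strategy in the (ordinary) s-Hausdorff dimension game G^s_β̄(A). -/

import Mathlib

/-!
The proof goes through an `s`-dimensional content, the outer measure generated by giving weight
`(ρ k) ^ s` to balls of radius `ρ k / 2`, `k ≥ 1`.

*Content zero suffices.* If `content A = 0`, player II wins the ordinary `s`-game for `A`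
(`winsII_of_content_zero`): player II fixes covers of `A` of total weights at most `4⁻ʲ`, counts the
`j`-th one with the factor `2 ^ j`, and always answers with a point of the offered set near which
the remaining weight is least. As the offered points are separated, each round divides the remaining
weight by `|F i|`. A limit in `A` lies in a ball of every cover, and for large `j` that ball is too
heavy for the bound on the sizes in rule (4).

*A winning `τ` forces content zero.* Let player I explore the unfolded `δ`-game against `τ`. At a
position with current point `x m`, and for each admitted option (no digit, or a digit below `g m`),
player I considers offers from a fine rational net of the ball: a maximal separated subset of the
net, then one of the net without the answer of `τ`, and so on, as long as the offers are large
enough to keep the ratio in rule (4) at most `1 / c`. The net points never answered are few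
(`exists_step`), and the reciprocals of the sizes of the offers have a harmonic, hence logarithmic,
sum. A point is lost if at some explored position it is near an unanswered net point. Summing over
the tree, the reciprocals of the products of sizes grow only by the factors
`(g m + 1) * K * (1 + log (1 / β m))`, and the gap `s - δ > 0`, together with `β → 0` and the slow
decay hypothesis on `β`, absorbs these factors even for some `g → ∞` (`exists_params`). Hence the
lost set has content `O(c)` (`exists_lost`).

A point `x` that is not lost can be followed through the tree forever, whatever admitted digits are
played. If `(x, y) ∈ R`, player I plays each digit of `y` as soon as it is admitted; since `g → ∞`
every digit gets played, and the resulting run, consistent with `τ`, obeys all rules and is won by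
player I (`proj_subset_lost`). As `τ` is winning, the projection of `R` lies locally in the lost
set, and letting `c → 0` its content vanishes (`content_proj_eq_zero`).
-/

open MeasureTheory Metric Filter Set Topology ENNReal

noncomputable section

namespace HDGame

/-- `d`-dimensional Euclidean space. -/
abbrev Euc (d : ℕ) := EuclideanSpace ℝ (Fin d)

/-- The hypotheses on the game parameters `d`, `ρ₀`, `(β i)`:
`d ≥ 1`, `ρ₀ > 0`, `0 < β (i+1) ≤ β i < 1/2`, `β i → 0`, and
for every `η > 0`, `β n ≥ ∏_{i<n} β i ^ η` for all large `n`. -/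
structure Params (d : ℕ) (ρ₀ : ℝ) (β : ℕ → ℝ) : Prop where
  hd : 1 ≤ d
  hρ₀ : 0 < ρ₀
  hβpos : ∀ i, 0 < β i
  hβmono : ∀ i, β (i + 1) ≤ β i
  hβhalf : ∀ i, β i < 1 / 2
  hβlim : Tendsto β atTop (nhds 0)
  hβslow : ∀ η : ℝ, 0 < η → ∃ n₀ : ℕ, ∀ n ≥ n₀, (∏ i ∈ Finset.range n, β i ^ η) ≤ β n

variable (ρ₀ : ℝ) (β : ℕ → ℝ)

/-- The radii `ρ n = (∏_{i<n} β i) · ρ₀`. -/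
def ρ (n : ℕ) : ℝ := (∏ i ∈ Finset.range n, β i) * ρ₀

/-- A point of `ℝ^d` all of whose coordinates are rational. -/
def RatPt {d : ℕ} (p : Euc d) : Prop := ∀ j : Fin d, ∃ q : ℚ, p j = (q : ℝ)

variable {d : ℕ}

/-- Rules (1) and (2) for player I's move `F` at round `i`: `F` is a (nonempty) finite set of
rational points which is `3·ρ i`-separated. -/
def LegalSet (i : ℕ) (F : Finset (Euc d)) : Prop :=
  F.Nonempty ∧ (∀ p ∈ F, RatPt p) ∧
    ∀ p ∈ F, ∀ q ∈ F, p ≠ q → 3 * ρ ρ₀ β i ≤ dist p q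

/-- Player I has followed rules (1)–(3) through round `n` of the run `(F, x)`
(this is everything player II needs to know before answering `F n`). -/
def LegalThrough (F : ℕ → Finset (Euc d)) (x : ℕ → Euc d) (n : ℕ) : Prop :=
  (∀ i ≤ n, LegalSet ρ₀ β i (F i)) ∧
    ∀ i < n, ∀ p ∈ F (i + 1), p ∈ ball (x i) ((1 - β i) * ρ ρ₀ β i)

/-- Player I follows all of rules (1)–(4) along the infinite run `(F, x)`, for exponent `δ`.
Rule (4), `limsup_n (∏_{i<n} |F i|⁻¹)/(∏_{i<n} β i ^ δ) ≤ c` for some `c > 0`, is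
phrased equivalently as eventual boundedness by some `c > 0`. -/
def IRules (δ : ℝ) (F : ℕ → Finset (Euc d)) (x : ℕ → Euc d) : Prop :=
  (∀ i, LegalSet ρ₀ β i (F i)) ∧
    (∀ i, ∀ p ∈ F (i + 1), p ∈ ball (x i) ((1 - β i) * ρ ρ₀ β i)) ∧
    ∃ c : ℝ, 0 < c ∧ ∀ᶠ n in atTop,
      (∏ i ∈ Finset.range n, ((F i).card : ℝ))⁻¹ / (∏ i ∈ Finset.range n, β i ^ δ) ≤ c

/-- A strategy for player I in the ordinary game: given the finite position (the list of
completed rounds, each a pair (Fᵢ, xᵢ)), produce the next finite set. -/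
abbrev StratI (d : ℕ) := List (Finset (Euc d) × Euc d) → Finset (Euc d)

/-- A strategy for player II in the ordinary game: given the finite position and player I's
latest move, produce a point. -/
abbrev StratII (d : ℕ) := List (Finset (Euc d) × Euc d) → Finset (Euc d) → Euc d

/-- The position after `n` complete rounds of the run `(F, x)`. -/
def hist (F : ℕ → Finset (Euc d)) (x : ℕ → Euc d) (n : ℕ) : List (Finset (Euc d) × Euc d) :=
  List.ofFn fun i : Fin n => (F i, x i)

/-- The run `(F, x)` is consistent with the strategy `σ` of player I. -/
def ConsistentI (σ : StratI d) (F : ℕ → Finset (Euc d)) (x : ℕ → Euc d) : Prop :=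
  ∀ n, F n = σ (hist F x n)

/-- The run `(F, x)` is consistent with the strategy `τ` of player II. -/
def ConsistentII (τ : StratII d) (F : ℕ → Finset (Euc d)) (x : ℕ → Euc d) : Prop :=
  ∀ n, x n = τ (hist F x n) (F n)

/-- `σ` is a winning strategy for player I in `G^δ_β̄(A)`: along any run consistent with `σ` in
which player II obeys the rule `x n ∈ F n`, player I obeys all rules and `lim x n ∈ A`. -/
def WinsI (δ : ℝ) (A : Set (Euc d)) (σ : StratI d) : Prop :=
  ∀ F x, ConsistentI σ F x → (∀ n, x n ∈ F n) →
    IRules ρ₀ β δ F x ∧ ∃ z ∈ A, Tendsto x atTop (nhds z)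

/-- `τ` is a winning strategy for player II in `G^δ_β̄(A)`: along any run consistent with `τ`,
player II plays inside player I's sets as long as player I has been legal, and if player I
obeys all rules then the limit of player II's points is not in `A`. -/
def WinsII (δ : ℝ) (A : Set (Euc d)) (τ : StratII d) : Prop :=
  ∀ F x, ConsistentII τ F x →
    (∀ n, LegalThrough ρ₀ β F x n → x n ∈ F n) ∧
    (IRules ρ₀ β δ F x → ∀ z, Tendsto x atTop (nhds z) → z ∉ A)

/-! ### The unfolded game -/

/-- `Matches g y` says that the infinite sequence `y : ℕ → ℕ` is exactly the sequence of
digits played (the `some` values of `g`, in order); in particular `g` has infinitely many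
`some` entries. -/
def Matches (g : ℕ → Option ℕ) (y : ℕ → ℕ) : Prop :=
  ∃ k : ℕ → ℕ, StrictMono k ∧ (∀ n, (g n).isSome ↔ ∃ j, k j = n) ∧
    ∀ j, g (k j) = Option.some (y j)

/-- A strategy for player I in the unfolded game: from a finite position, produce a finite set
together with (optionally) one more digit of the witness. -/
abbrev UStratI (d : ℕ) := List ((Finset (Euc d) × Option ℕ) × Euc d) → Finset (Euc d) × Option ℕ

/-- A strategy for player II in the unfolded game. -/
abbrev UStratII (d : ℕ) :=
  List ((Finset (Euc d) × Option ℕ) × Euc d) → Finset (Euc d) × Option ℕ → Euc d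

/-- The position after `n` complete rounds of the unfolded run `(F, g, x)`. -/
def uhist (F : ℕ → Finset (Euc d)) (g : ℕ → Option ℕ) (x : ℕ → Euc d) (n : ℕ) :
    List ((Finset (Euc d) × Option ℕ) × Euc d) :=
  List.ofFn fun i : Fin n => ((F i, g i), x i)

/-- The unfolded run `(F, g, x)` is consistent with player I's strategy `σ`. -/
def UConsistentI (σ : UStratI d) (F : ℕ → Finset (Euc d)) (g : ℕ → Option ℕ)
    (x : ℕ → Euc d) : Prop :=
  ∀ n, (F n, g n) = σ (uhist F g x n)

/-- The unfolded run `(F, g, x)` is consistent with player II's strategy `τ`. -/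
def UConsistentII (τ : UStratII d) (F : ℕ → Finset (Euc d)) (g : ℕ → Option ℕ)
    (x : ℕ → Euc d) : Prop :=
  ∀ n, x n = τ (uhist F g x n) (F n, g n)

/-- `σ` is a winning strategy for player I in the unfolded `δ`-Hausdorff dimension game with
target relation `R ⊆ ℝ^d × (ℕ → ℕ)`: along any consistent run in which player II obeys
`x n ∈ F n`, player I obeys rules (1)–(4), plays every digit of an infinite witness `y`, and
`(lim x n, y) ∈ R`. -/
def UWinsI (δ : ℝ) (R : Set (Euc d × (ℕ → ℕ))) (σ : UStratI d) : Prop :=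
  ∀ F g x, UConsistentI σ F g x → (∀ n, x n ∈ F n) →
    IRules ρ₀ β δ F x ∧
      ∃ z y, Tendsto x atTop (nhds z) ∧ Matches g y ∧ (z, y) ∈ R

/-- `τ` is a winning strategy for player II in the unfolded `δ`-Hausdorff dimension game with
target relation `R`: along any consistent run, player II plays inside player I's sets as long
as player I has been legal, and if player I obeys rules (1)–(4) then it is not the case that
player I produces a full witness `y` with `(lim x n, y) ∈ R`. -/
def UWinsII (δ : ℝ) (R : Set (Euc d × (ℕ → ℕ))) (τ : UStratII d) : Prop :=
  ∀ F g x, UConsistentII τ F g x →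
    (∀ n, LegalThrough ρ₀ β F x n → x n ∈ F n) ∧
    (IRules ρ₀ β δ F x →
      ∀ z y, Tendsto x atTop (nhds z) → Matches g y → (z, y) ∉ R)

end HDGame

open HDGame

/-! ### The radii -/

namespace HDGame

variable {d : ℕ} {ρ₀ : ℝ} {β : ℕ → ℝ}

lemma rho_succ (n : ℕ) : ρ ρ₀ β (n + 1) = β n * ρ ρ₀ β n := by
  simp only [ρ, Finset.prod_range_succ]; ring

lemma prod_pos (h : Params d ρ₀ β) (n : ℕ) : 0 < ∏ i ∈ Finset.range n, β i :=
  Finset.prod_pos fun i _ => h.hβpos i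

lemma rho_pos (h : Params d ρ₀ β) (n : ℕ) : 0 < ρ ρ₀ β n :=
  mul_pos (prod_pos h n) h.hρ₀

lemma rho_succ_le (h : Params d ρ₀ β) (n : ℕ) : ρ ρ₀ β (n + 1) ≤ ρ ρ₀ β n / 2 := by
  rw [rho_succ]
  nlinarith [rho_pos h n, h.hβhalf n]

lemma rho_anti (h : Params d ρ₀ β) : StrictAnti (ρ ρ₀ β) :=
  strictAnti_nat_of_succ_lt fun n => by linarith [rho_succ_le h n, rho_pos h n]

lemma rho_tendsto (h : Params d ρ₀ β) : Tendsto (ρ ρ₀ β) atTop (𝓝 0) := by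
  have hle : ∀ n, ρ ρ₀ β n ≤ ρ₀ * (1 / 2) ^ n := by
    intro n
    induction n with
    | zero => simp [ρ]
    | succ n ih =>
      calc _ ≤ _ := rho_succ_le h n
        _ ≤ (ρ₀ * (1 / 2) ^ n) / 2 := by linarith
        _ = _ := by ring
  refine squeeze_zero (fun n => (rho_pos h n).le) hle ?_
  simpa using (tendsto_pow_atTop_nhds_zero_of_lt_one (r := (1 / 2 : ℝ)) (by norm_num)
    (by norm_num)).const_mul ρ₀

/-- Under the rules, the limit of the points of player II stays in the closed ball of radius
`ρ m` around the `m`-th point. -/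
lemma dist_limit_le {F : ℕ → Finset (Euc d)} {x : ℕ → Euc d}
    (h : Params d ρ₀ β) (hx : ∀ n, x n ∈ F n)
    (hF : ∀ i, ∀ p ∈ F (i + 1), p ∈ ball (x i) ((1 - β i) * ρ ρ₀ β i))
    {z : Euc d} (hz : Tendsto x atTop (𝓝 z)) (m : ℕ) : dist z (x m) ≤ ρ ρ₀ β m := by
  have key : ∀ k, dist (x (m + k)) (x m) ≤ ρ ρ₀ β m - ρ ρ₀ β (m + k) := by
    intro k
    induction k with
    | zero => simp
    | succ k ih =>
      have h1 := hF (m + k) _ (hx (m + k + 1))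
      rw [mem_ball] at h1
      have h2 := rho_succ (ρ₀ := ρ₀) (β := β) (m + k)
      have h3 := dist_triangle (x (m + k + 1)) (x (m + k)) (x m)
      rw [← add_assoc]
      linarith
  have hz' : Tendsto (fun k => x (m + k)) atTop (𝓝 z) :=
    hz.comp (tendsto_atTop_mono (fun k => Nat.le_add_left k m) tendsto_id)
  refine le_of_tendsto (hz'.dist tendsto_const_nhds) (Eventually.of_forall fun k => ?_)
  linarith [key k, rho_pos h (m + k)]

/-! ### The covering content -/

/-- The weight of a set `U`: the infimum of `ρ k ^ s` over all closed balls of radius `ρ k / 2`,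
`k ≥ 1`, that contain `U`. -/
def weight (d : ℕ) (ρ₀ : ℝ) (β : ℕ → ℝ) (s : ℝ) (U : Set (Euc d)) : ℝ≥0∞ :=
  ⨅ p : Euc d × ℕ, ⨅ _ : 1 ≤ p.2 ∧ U ⊆ closedBall p.1 (ρ ρ₀ β p.2 / 2),
    ENNReal.ofReal (ρ ρ₀ β p.2 ^ s)

lemma weight_le {s : ℝ} {U : Set (Euc d)} (q : Euc d) {k : ℕ} (hk : 1 ≤ k)
    (hU : U ⊆ closedBall q (ρ ρ₀ β k / 2)) :
    weight d ρ₀ β s U ≤ ENNReal.ofReal (ρ ρ₀ β k ^ s) :=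
  iInf₂_le (f := fun (p : Euc d × ℕ) (_ : 1 ≤ p.2 ∧ U ⊆ closedBall p.1 (ρ ρ₀ β p.2 / 2)) =>
    ENNReal.ofReal (ρ ρ₀ β p.2 ^ s)) (q, k) ⟨hk, hU⟩

lemma weight_empty (h : Params d ρ₀ β) {s : ℝ} (hs : 0 < s) : weight d ρ₀ β s ∅ = 0 := by
  have ht : Tendsto (fun k => ENNReal.ofReal (ρ ρ₀ β k ^ s)) atTop (𝓝 0) := by
    have h1 := (rho_tendsto h).rpow_const (p := s) (Or.inr hs.le)
    rw [Real.zero_rpow hs.ne'] at h1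
    simpa using ENNReal.tendsto_ofReal h1
  refine le_antisymm (ge_of_tendsto ht ?_) bot_le
  filter_upwards [eventually_ge_atTop 1] with k hk
  exact weight_le 0 hk (empty_subset _)

/-- The `s`-dimensional Hausdorff content associated with the scales `ρ k`, `k ≥ 1`. -/
def content (h : Params d ρ₀ β) {s : ℝ} (hs : 0 < s) : OuterMeasure (Euc d) :=
  OuterMeasure.ofFunction (weight d ρ₀ β s) (weight_empty h hs)

lemma content_ball_le (h : Params d ρ₀ β) {s : ℝ} (hs : 0 < s) (q : Euc d) {k : ℕ}
    (hk : 1 ≤ k) :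
    content h hs (closedBall q (ρ ρ₀ β k / 2)) ≤ ENNReal.ofReal (ρ ρ₀ β k ^ s) :=
  (OuterMeasure.ofFunction_le _).trans (weight_le q hk subset_rfl)

/-- A set of content zero has covers by balls of radius `ρ k / 2` of arbitrarily small total
weight. -/
lemma exists_cover (h : Params d ρ₀ β) {s : ℝ} (hs : 0 < s) {A : Set (Euc d)}
    (hA : content h hs A = 0) {ε : ℝ≥0∞} (hε : ε ≠ 0) :
    ∃ (q : ℕ → Euc d) (k : ℕ → ℕ), (∀ n, 1 ≤ k n) ∧
      (A ⊆ ⋃ n, closedBall (q n) (ρ ρ₀ β (k n) / 2)) ∧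
      ∑' n, ENNReal.ofReal (ρ ρ₀ β (k n) ^ s) ≤ ε := by
  have hε2 : ε / 2 ≠ 0 := (ENNReal.half_pos hε).ne'
  rw [content, OuterMeasure.ofFunction_apply] at hA
  have h1 : (⨅ (t : ℕ → Set (Euc d)) (_ : A ⊆ iUnion t), ∑' n, weight d ρ₀ β s (t n)) < ε / 2 :=
    hA ▸ pos_iff_ne_zero.2 hε2
  obtain ⟨t, ht⟩ := iInf_lt_iff.1 h1
  obtain ⟨htA, hsum⟩ := iInf_lt_iff.1 ht
  obtain ⟨e, he, hesum⟩ := ENNReal.exists_pos_sum_of_countable' hε2 ℕ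
  have h2 : ∀ n, ∃ p : Euc d × ℕ, (1 ≤ p.2 ∧ t n ⊆ closedBall p.1 (ρ ρ₀ β p.2 / 2)) ∧
      ENNReal.ofReal (ρ ρ₀ β p.2 ^ s) < weight d ρ₀ β s (t n) + e n := by
    intro n
    have h3 : weight d ρ₀ β s (t n) < weight d ρ₀ β s (t n) + e n :=
      ENNReal.lt_add_right (ne_top_of_le_ne_top hsum.ne_top (ENNReal.le_tsum n)) (he n).ne'
    obtain ⟨p, hp⟩ := iInf_lt_iff.1 h3
    obtain ⟨hp1, hp2⟩ := iInf_lt_iff.1 hp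
    exact ⟨p, hp1, hp2⟩
  choose p hp1 hp2 using h2
  refine ⟨fun n => (p n).1, fun n => (p n).2, fun n => (hp1 n).1, ?_, ?_⟩
  · exact htA.trans (iUnion_mono fun n => (hp1 n).2)
  · calc _ ≤ ∑' n, (weight d ρ₀ β s (t n) + e n) := ENNReal.tsum_le_tsum fun n => (hp2 n).le
      _ = ∑' n, weight d ρ₀ β s (t n) + ∑' n, e n := ENNReal.tsum_add
      _ ≤ ε / 2 + ε / 2 := add_le_add hsum.le hesum.le
      _ = ε := ENNReal.add_halves ε

end HDGame

/-! ### The ordinary game on a set of content zero -/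

namespace HDGame

variable {d : ℕ} {ρ₀ : ℝ} {β : ℕ → ℝ}

/-- The potential at the point `x` in round `m` of a weighted family of balls
(centres `q`, levels `k`, weights `w`): the total weight of the balls of level beyond `m` that come
close enough to `x` to still be able to contain the limit of the run. -/
def potential (ρ₀ : ℝ) (β : ℕ → ℝ) {ι : Type} (q : ι → Euc d) (k : ι → ℕ) (w : ι → ℝ≥0∞)
    (m : ℕ) (x : Euc d) : ℝ≥0∞ :=
  open Classical in
  ∑' i, if m < k i ∧ dist (q i) x ≤ ρ ρ₀ β (k i) / 2 + ρ ρ₀ β m then w i else 0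

variable {ι : Type} {q : ι → Euc d} {k : ι → ℕ} {w : ι → ℝ≥0∞}

/-- A ball of level beyond `m` is close to at most one point of a legal set of round `m`, so if
`P i` holds whenever ball `i` is close to a point of the set, then the potentials add up to at most
the total weight of the balls with `P i`. -/
lemma sum_potential_le (h : Params d ρ₀ β) {m : ℕ} {F : Finset (Euc d)}
    (hF : LegalSet ρ₀ β m F) (P : ι → Prop) [DecidablePred P]
    (hP : ∀ x ∈ F, ∀ i, m < k i → dist (q i) x ≤ ρ ρ₀ β (k i) / 2 + ρ ρ₀ β m → P i) :
    ∑ x ∈ F, potential ρ₀ β q k w m x ≤ ∑' i, if P i then w i else 0 := by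
  classical
  simp only [potential]
  rw [← Summable.tsum_finsetSum (fun _ _ => ENNReal.summable)]
  refine ENNReal.tsum_le_tsum fun i => ?_
  by_cases hex : ∃ x ∈ F, m < k i ∧ dist (q i) x ≤ ρ ρ₀ β (k i) / 2 + ρ ρ₀ β m
  · obtain ⟨x, hxF, hx⟩ := hex
    rw [if_pos (hP x hxF i hx.1 hx.2), Finset.sum_eq_single_of_mem x hxF]
    · rw [if_pos hx]
    · intro y hyF hyx
      rw [if_neg]
      intro hy
      have h1 := hF.2.2 y hyF x hxF hyx
      have h2 := dist_triangle_left y x (q i)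
      have h3 := rho_anti h hx.1
      linarith [hx.2, hy.2]
  · push Not at hex
    rw [Finset.sum_eq_zero]
    · exact bot_le
    · intro x hxF
      rw [if_neg]
      rintro ⟨h1, h2⟩
      exact absurd h2 (not_le.2 (hex x hxF h1))

lemma exists_argmin (f : Euc d → ℝ≥0∞) (F : Finset (Euc d)) :
    ∃ x, F.Nonempty → x ∈ F ∧ ∀ y ∈ F, f x ≤ f y := by
  by_cases hF : F.Nonempty
  · obtain ⟨x, hx⟩ := F.exists_min_image f hF
    exact ⟨x, fun _ => hx⟩
  · exact ⟨0, fun h => absurd h hF⟩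

/-- On a set of content zero player II wins the ordinary game by always minimizing a potential:
each answer divides the potential by the size of player I's set, whereas rule (4) bounds the
product of these sizes from below by a constant multiple of `ρ n ^ (-s)`. -/
theorem winsII_of_content_zero (h : Params d ρ₀ β) {s : ℝ} (hs : 0 < s) {A : Set (Euc d)}
    (hA : content h hs A = 0) : ∃ τ' : StratII d, WinsII ρ₀ β s A τ' := by
  classical
  -- The `j`-th cover has total weight at most `4⁻ʲ` and is counted with the factor `2 ^ j`.
  have hcov := fun j : ℕ => exists_cover h hs hA (ε := ((4 : ℝ≥0∞)⁻¹) ^ j)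
    (pow_ne_zero _ (ENNReal.inv_ne_zero.2 (by simp)))
  choose q k hk hAq hsum using hcov
  let Q : ℕ × ℕ → Euc d := fun i => q i.1 i.2
  let K : ℕ × ℕ → ℕ := fun i => k i.1 i.2
  let w : ℕ × ℕ → ℝ≥0∞ := fun i => 2 ^ i.1 * ENNReal.ofReal (ρ ρ₀ β (k i.1 i.2) ^ s)
  have hW : ∑' i, w i ≤ 2 := by
    rw [ENNReal.tsum_prod']
    calc ∑' a, ∑' b, w (a, b) ≤ ∑' a : ℕ, ((2 : ℝ≥0∞)⁻¹) ^ a := by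
          refine ENNReal.tsum_le_tsum fun a => ?_
          simp only [w]
          rw [ENNReal.tsum_mul_left]
          calc _ ≤ (2 : ℝ≥0∞) ^ a * (4 : ℝ≥0∞)⁻¹ ^ a := by gcongr; exact hsum a
            _ = ((2 : ℝ≥0∞)⁻¹) ^ a := by
              rw [← mul_pow]
              congr 1
              rw [show (4 : ℝ≥0∞) = 2 * 2 by norm_num,
                ENNReal.mul_inv (Or.inl (by simp)) (Or.inl (by simp)), ← mul_assoc,
                ENNReal.mul_inv_cancel (by simp) (by simp), one_mul]
      _ = 2 := by rw [ENNReal.tsum_geometric, ENNReal.one_sub_inv_two, inv_inv]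
  let Φ := potential ρ₀ β Q K w
  choose arg harg using fun (m : ℕ) (F : Finset (Euc d)) => exists_argmin (Φ m) F
  refine ⟨fun H F => arg H.length F, fun F x hcons => ?_⟩
  have hx : ∀ n, x n = arg n (F n) := fun n => by
    have := hcons n
    simpa [hist] using this
  refine ⟨fun n hn => ?_, fun hI z hz hzA => ?_⟩
  · rw [hx]
    exact (harg n (F n) (hn.1 n le_rfl).1).1
  obtain ⟨hleg, hball, c, hc, hev⟩ := hI
  have hxF : ∀ n, x n ∈ F n := fun n => by
    rw [hx]; exact (harg n (F n) (hleg n).1).1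
  have hmin : ∀ n, ((F n).card : ℝ≥0∞) * Φ n (x n) ≤ ∑ y ∈ F n, Φ n y := by
    intro n
    rw [← nsmul_eq_mul]
    refine Finset.card_nsmul_le_sum _ _ _ fun y hy => ?_
    rw [hx]
    exact (harg n (F n) (hleg n).1).2 y hy
  have hΦ : ∀ m, (∏ i ∈ Finset.range (m + 1), ((F i).card : ℝ≥0∞)) * Φ m (x m) ≤ 2 := by
    intro m
    induction m with
    | zero =>
      simp only [zero_add, Finset.range_one, Finset.prod_singleton]
      refine (hmin 0).trans (le_trans ?_ hW)
      refine (sum_potential_le h (hleg 0) (fun _ => True) (fun _ _ _ _ _ => trivial)).trans ?_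
      simp
    | succ m ih =>
      rw [Finset.prod_range_succ, mul_assoc]
      refine le_trans ?_ ih
      gcongr
      refine (hmin (m + 1)).trans ?_
      refine sum_potential_le h (hleg (m + 1))
        (fun i => m < K i ∧ dist (Q i) (x m) ≤ ρ ρ₀ β (K i) / 2 + ρ ρ₀ β m) ?_
      intro y hy i hi hd
      refine ⟨by omega, ?_⟩
      have h1 := hball m y hy
      rw [mem_ball] at h1
      have h2 := rho_succ (ρ₀ := ρ₀) (β := β) m
      have h3 := dist_triangle (Q i) y (x m)
      linarith
  have hbdd : BddAbove (range fun n => (∏ i ∈ Finset.range n, ((F i).card : ℝ))⁻¹ /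
      (∏ i ∈ Finset.range n, β i ^ s)) :=
    IsBoundedUnder.bddAbove_range ⟨c, hev⟩
  obtain ⟨C, hC⟩ := hbdd
  have hC' : ∀ n, (∏ i ∈ Finset.range n, ((F i).card : ℝ))⁻¹ /
      (∏ i ∈ Finset.range n, β i ^ s) ≤ C := fun n => hC ⟨n, rfl⟩
  have hcard : ∀ n, 0 < ∏ i ∈ Finset.range n, ((F i).card : ℝ) := fun n =>
    Finset.prod_pos fun i _ => by exact_mod_cast (hleg i).1.card_pos
  have hfin : ∀ j : ℕ, (2 : ℝ) ^ j * ρ₀ ^ s ≤ 2 * C := by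
    intro j
    obtain ⟨n, hn⟩ := mem_iUnion.1 (hAq j hzA)
    obtain ⟨m, hm⟩ : ∃ m, k j n = m + 1 := ⟨k j n - 1, by have := hk j n; omega⟩
    have hle : w (j, n) ≤ Φ m (x m) := by
      refine le_trans ?_ (ENNReal.le_tsum (j, n))
      rw [if_pos]
      refine ⟨by simp only [K]; omega, ?_⟩
      have h1 := dist_limit_le h hxF hball hz m
      have h2 := dist_triangle_left (Q (j, n)) (x m) z
      rw [mem_closedBall] at hn
      simp only [Q, K] at *
      linarith
    have h1 : (∏ i ∈ Finset.range (m + 1), ((F i).card : ℝ≥0∞)) *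
        (2 ^ j * ENNReal.ofReal (ρ ρ₀ β (m + 1) ^ s)) ≤ 2 := by
      refine le_trans ?_ (hΦ m)
      gcongr
      rw [← hm]
      exact hle
    have h2 : (∏ i ∈ Finset.range (m + 1), ((F i).card : ℝ)) *
        (2 ^ j * ρ ρ₀ β (m + 1) ^ s) ≤ 2 := by
      have h3 := ENNReal.toReal_mono (by simp) h1
      have h4 := Real.rpow_nonneg (rho_pos h (m + 1)).le s
      simpa [ENNReal.toReal_mul, ENNReal.toReal_prod, ENNReal.toReal_ofReal h4] using h3
    have h5 := hC' (m + 1)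
    have hP : 0 < ∏ i ∈ Finset.range (m + 1), β i ^ s :=
      Finset.prod_pos fun i _ => Real.rpow_pos_of_pos (h.hβpos i) s
    have h6 : ρ ρ₀ β (m + 1) ^ s = (∏ i ∈ Finset.range (m + 1), β i ^ s) * ρ₀ ^ s := by
      rw [ρ, Real.mul_rpow (prod_pos h _).le h.hρ₀.le,
        Real.finsetProd_rpow _ _ (fun i _ => (h.hβpos i).le)]
    have h7 := hcard (m + 1)
    rw [h6] at h2
    rw [div_le_iff₀ hP, inv_le_iff_one_le_mul₀' h7] at h5
    have h8 : 0 ≤ (2 : ℝ) ^ j * ρ₀ ^ s := by have := h.hρ₀; positivity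
    have h9 : 0 < C := by
      by_contra hneg
      push Not at hneg
      have : C * ∏ i ∈ Finset.range (m + 1), β i ^ s ≤ 0 :=
        mul_nonpos_of_nonpos_of_nonneg hneg hP.le
      nlinarith
    nlinarith
  have hr : 0 < ρ₀ ^ s := Real.rpow_pos_of_pos h.hρ₀ s
  obtain ⟨j, hj⟩ := pow_unbounded_of_one_lt (2 * C / ρ₀ ^ s) (one_lt_two)
  rw [div_lt_iff₀ hr] at hj
  linarith [hfin j]

end HDGame

/-! ### Lattice points and separated sets -/

namespace HDGame

variable {d : ℕ} {ρ₀ : ℝ} {β : ℕ → ℝ}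

/-- Membership in the lattice `η · ℤ^d`. -/
def IsLat (η : ℝ) (p : Euc d) : Prop := ∀ j, ∃ n : ℤ, p j = n * η

lemma IsLat.ratPt {η : ℚ} {p : Euc d} (hp : IsLat (η : ℝ) p) : RatPt p := by
  intro j
  obtain ⟨n, hn⟩ := hp j
  exact ⟨n * η, by rw [hn]; push_cast; rfl⟩

lemma abs_coord_le (p c : Euc d) (j : Fin d) : |p j - c j| ≤ dist p c := by
  rw [dist_eq_norm]
  exact PiLp.norm_apply_le (p - c) j

lemma exists_lattice_finset {η R : ℝ} (hη : 0 < η) (hR : 0 ≤ R) (c : Euc d) :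
    ∃ G : Finset (Euc d), (∀ p, IsLat η p → dist p c ≤ R → p ∈ G) ∧
      (G.card : ℝ) ≤ (2 * R / η + 1) ^ d := by
  classical
  let I : Fin d → Finset ℤ := fun j => Finset.Icc ⌈(c j - R) / η⌉ ⌊(c j + R) / η⌋
  have hI : ∀ j, ((I j).card : ℝ) ≤ 2 * R / η + 1 := by
    intro j
    simp only [I, Int.card_Icc]
    have h1 : ((⌊(c j + R) / η⌋ + 1 - ⌈(c j - R) / η⌉ : ℤ) : ℝ) ≤ 2 * R / η + 1 := by
      push_cast
      have h2 := Int.floor_le ((c j + R) / η)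
      have h3 := Int.le_ceil ((c j - R) / η)
      have h4 : (c j + R) / η - (c j - R) / η = 2 * R / η := by ring
      linarith
    have h5 : (0 : ℝ) ≤ 2 * R / η + 1 := by positivity
    rcases le_total 0 (⌊(c j + R) / η⌋ + 1 - ⌈(c j - R) / η⌉) with h6 | h6
    · have h7 : ((⌊(c j + R) / η⌋ + 1 - ⌈(c j - R) / η⌉).toNat : ℝ) =
          ((⌊(c j + R) / η⌋ + 1 - ⌈(c j - R) / η⌉ : ℤ) : ℝ) := by
        exact_mod_cast Int.toNat_of_nonneg h6
      rw [h7]; exact h1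
    · rw [Int.toNat_of_nonpos h6]; simpa using h5
  refine ⟨(Fintype.piFinset I).image fun v => WithLp.toLp 2 fun j => (v j : ℝ) * η, ?_, ?_⟩
  · intro p hp hpc
    choose v hv using hp
    rw [Finset.mem_image]
    refine ⟨v, ?_, ?_⟩
    · rw [Fintype.mem_piFinset]
      intro j
      have h1 := abs_le.1 ((abs_coord_le p c j).trans hpc)
      rw [hv] at h1
      rw [Finset.mem_Icc, Int.ceil_le, Int.le_floor, div_le_iff₀ hη, le_div_iff₀ hη]
      constructor <;> linarith
    · ext j; simp [hv]
  · calc _ ≤ ((Fintype.piFinset I).card : ℝ) := by exact_mod_cast Finset.card_image_le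
      _ = ∏ j, ((I j).card : ℝ) := by rw [Fintype.card_piFinset]; push_cast; rfl
      _ ≤ ∏ _j : Fin d, (2 * R / η + 1) :=
        Finset.prod_le_prod (fun _ _ => by positivity) fun j _ => hI j
      _ = _ := by simp

lemma exists_lattice_near {η : ℝ} (hη : 0 < η) (x : Euc d) :
    ∃ p : Euc d, IsLat η p ∧ dist p x ≤ d * η := by
  refine ⟨WithLp.toLp 2 fun j => (⌊x j / η⌋ : ℝ) * η, fun j => ⟨⌊x j / η⌋, rfl⟩, ?_⟩
  rw [EuclideanSpace.dist_eq]
  refine Real.sqrt_le_iff.2 ⟨by positivity, ?_⟩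
  have h1 : ∀ j : Fin d, dist ((⌊x j / η⌋ : ℝ) * η) (x j) ^ 2 ≤ η ^ 2 := by
    intro j
    rw [Real.dist_eq, sq_abs, sq_le_sq, abs_of_pos hη, abs_le]
    have h2 := Int.floor_le (x j / η)
    have h3 := Int.lt_floor_add_one (x j / η)
    rw [le_div_iff₀ hη] at h2
    rw [div_lt_iff₀ hη] at h3
    constructor <;> linarith
  calc _ ≤ ∑ _j : Fin d, η ^ 2 := Finset.sum_le_sum fun j _ => h1 j
    _ = d * η ^ 2 := by simp
    _ ≤ (d : ℝ) ^ 2 * η ^ 2 := by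
      gcongr
      have : d ≤ d ^ 2 := Nat.le_self_pow (by norm_num) d
      exact_mod_cast this
    _ = _ := by ring

/-- A maximal `r`-separated subset has at least the proportion `1 / K` of all points when balls
of radius `r` contain at most `K` points. -/
lemma exists_separated {r K : ℝ} (hr : 0 < r) (Q : Finset (Euc d))
    (hK : ∀ p ∈ Q, ((Q.filter fun y => dist y p < r).card : ℝ) ≤ K) :
    ∃ F ⊆ Q, (∀ p ∈ F, ∀ y ∈ F, p ≠ y → r ≤ dist p y) ∧ (Q.card : ℝ) ≤ K * F.card := by
  classical
  let S := Q.powerset.filter fun F => ∀ p ∈ F, ∀ y ∈ F, p ≠ y → r ≤ dist p y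
  have hS : S.Nonempty := ⟨∅, by simp [S]⟩
  obtain ⟨F, hFS, hmax⟩ := S.exists_max_image Finset.card hS
  simp only [S, Finset.mem_filter, Finset.mem_powerset] at hFS hmax
  refine ⟨F, hFS.1, hFS.2, ?_⟩
  have hcov : Q ⊆ F.biUnion fun p => Q.filter fun y => dist y p < r := by
    intro y hy
    by_contra hcon
    simp only [Finset.mem_biUnion, Finset.mem_filter, not_exists, not_and, not_lt] at hcon
    have hyF : y ∉ F := fun hyF => by
      have := hcon y hyF hy
      rw [dist_self] at this
      linarith
    have h1 := hmax (insert y F) ⟨Finset.insert_subset hy hFS.1, ?_⟩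
    · rw [Finset.card_insert_of_notMem hyF] at h1
      omega
    · intro p hp z hz hpz
      rw [Finset.mem_insert] at hp hz
      rcases hp with rfl | hp <;> rcases hz with rfl | hz
      · exact absurd rfl hpz
      · exact hcon z hz hy
      · rw [dist_comm]; exact hcon p hp hy
      · exact hFS.2 p hp z hz hpz
  calc (Q.card : ℝ) ≤ ((F.biUnion fun p => Q.filter fun y => dist y p < r).card : ℝ) := by
        exact_mod_cast Finset.card_le_card hcov
    _ ≤ ∑ p ∈ F, ((Q.filter fun y => dist y p < r).card : ℝ) := by
        exact_mod_cast Finset.card_biUnion_le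
    _ ≤ ∑ _p ∈ F, K := Finset.sum_le_sum fun p hp => hK p (hFS.1 hp)
    _ = K * F.card := by rw [Finset.sum_const, nsmul_eq_mul, mul_comm]

/-- Offering maximal separated subsets of the points of `Q` not yet answered, until fewer than
`T` points can be offered, all but `K * T` points of `Q` occur as answers. The reciprocals of the
sizes of the offers are dominated by the harmonic series, since the number of remaining
points drops by one each time. -/
lemma exists_offers {r T K : ℝ} (hr : 0 < r) (hK : 0 < K) (hT : 0 ≤ T)
    (t : Finset (Euc d) → Euc d) (ht : ∀ F, F.Nonempty → t F ∈ F) :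
    ∀ (n : ℕ) (Q : Finset (Euc d)), Q.card = n →
    (∀ p ∈ Q, ((Q.filter fun y => dist y p < r).card : ℝ) ≤ K) →
    ∃ (Fs : Finset (Finset (Euc d))) (Q' : Finset (Euc d)), (Q'.card : ℝ) ≤ K * T ∧
      (∀ F ∈ Fs, F ⊆ Q ∧ F.Nonempty ∧ (∀ p ∈ F, ∀ y ∈ F, p ≠ y → r ≤ dist p y) ∧
        T ≤ F.card) ∧
      (∀ p ∈ Q, p ∈ Q' ∨ ∃ F ∈ Fs, t F = p) ∧
      ∑ F ∈ Fs, ((F.card : ℝ))⁻¹ ≤ K * ∑ j ∈ Finset.range n, ((j : ℝ) + 1)⁻¹ := by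
  classical
  intro n
  induction n with
  | zero =>
    intro Q hQ _
    rw [Finset.card_eq_zero] at hQ
    subst hQ
    exact ⟨∅, ∅, by simpa using mul_nonneg hK.le hT, by simp, by simp, by simp⟩
  | succ n ih =>
    intro Q hQ hmult
    by_cases hsmall : (Q.card : ℝ) ≤ K * T
    · refine ⟨∅, Q, hsmall, by simp, fun p hp => Or.inl hp, ?_⟩
      simp only [Finset.sum_empty]
      positivity
    push Not at hsmall
    obtain ⟨F, hFQ, hsep, hcard⟩ := exists_separated hr Q hmult
    have hTF : T ≤ F.card := by
      by_contra hcon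
      push Not at hcon
      nlinarith
    have hQpos : (0 : ℝ) < Q.card := by rw [hQ]; positivity
    have hFpos : (0 : ℝ) < F.card := by
      by_contra hcon
      push Not at hcon
      nlinarith
    have hFne : F.Nonempty := Finset.card_pos.1 (by exact_mod_cast hFpos)
    have htQ : t F ∈ Q := hFQ (ht F hFne)
    obtain ⟨Fs, Q', h1, h2, h3, h4⟩ := ih (Q.erase (t F))
      (by rw [Finset.card_erase_of_mem htQ, hQ]; rfl) (fun p hp => by
        refine le_trans ?_ (hmult p (Finset.mem_of_mem_erase hp))
        exact_mod_cast Finset.card_le_card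
          (Finset.filter_subset_filter _ (Finset.erase_subset _ _)))
    refine ⟨insert F Fs, Q', h1, ?_, ?_, ?_⟩
    · intro G hG
      rcases Finset.mem_insert.1 hG with rfl | hG
      · exact ⟨hFQ, hFne, hsep, hTF⟩
      · obtain ⟨g1, g2⟩ := h2 G hG
        exact ⟨g1.trans (Finset.erase_subset _ _), g2⟩
    · intro p hp
      by_cases hpt : t F = p
      · exact Or.inr ⟨F, Finset.mem_insert_self _ _, hpt⟩
      · rcases h3 p (Finset.mem_erase.2 ⟨fun e => hpt e.symm, hp⟩) with h5 | ⟨G, hG, h5⟩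
        · exact Or.inl h5
        · exact Or.inr ⟨G, Finset.mem_insert_of_mem hG, h5⟩
    · have h5 : ((F.card : ℝ))⁻¹ ≤ K * ((n : ℝ) + 1)⁻¹ := by
        rw [← div_eq_mul_inv, le_div_iff₀ (by positivity), inv_mul_le_iff₀ hFpos, mul_comm]
        rw [hQ] at hcard
        push_cast at hcard
        linarith
      rw [Finset.sum_range_succ, mul_add]
      by_cases hmem : F ∈ Fs
      · rw [Finset.insert_eq_of_mem hmem]
        have : 0 ≤ K * ((n : ℝ) + 1)⁻¹ := by positivity
        linarith
      · rw [Finset.sum_insert hmem]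
        linarith

/-- The bound for the number of points of the lattice used at level `m` within distance `3 ρ m` of
a point. -/
def multK (d : ℕ) : ℝ := (24 * (d : ℝ) + 1) ^ d

/-- The bound for the number of lattice points in the region of a position, in terms of the ratio
`b` of the two consecutive radii. -/
def netM (d : ℕ) (b : ℝ) : ℝ := (8 * (d : ℝ) / b + 1) ^ d

/-- All offers that player I makes in one round: they are legal, have at least `T` elements, and
their answers together with few exceptional points come close to every point of the region
`closedBall c (ρ m / 2)`. -/
lemma exists_step (h : Params d ρ₀ β) {m : ℕ} (hm : β m < 1 / 3) (c : Euc d) {T : ℝ}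
    (hT : 0 ≤ T) (t : Finset (Euc d) → Euc d) (ht : ∀ F, F.Nonempty → t F ∈ F) :
    ∃ (Fs : Finset (Finset (Euc d))) (Q' : Finset (Euc d)), (Q'.card : ℝ) ≤ multK d * T ∧
      (∀ F ∈ Fs, LegalSet ρ₀ β (m + 1) F ∧ (∀ p ∈ F, p ∈ ball c ((1 - β m) * ρ ρ₀ β m)) ∧
        T ≤ F.card) ∧
      (∀ x ∈ closedBall c (ρ ρ₀ β m / 2),
        (∃ p ∈ Q', x ∈ closedBall p (ρ ρ₀ β (m + 1) / 2)) ∨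
        ∃ F ∈ Fs, x ∈ closedBall (t F) (ρ ρ₀ β (m + 1) / 2)) ∧
      ∑ F ∈ Fs, ((F.card : ℝ))⁻¹ ≤ multK d * (1 + Real.log (netM d (β m))) := by
  classical
  have hd : (1 : ℝ) ≤ d := by exact_mod_cast h.hd
  have hd0 : (0 : ℝ) < d := by linarith
  have hρ := rho_pos h m
  have hρ' := rho_pos h (m + 1)
  have hβ := h.hβpos m
  have hsucc := rho_succ (ρ₀ := ρ₀) (β := β) m
  obtain ⟨η, hη1, hη2⟩ := exists_rat_btwn
    (show ρ ρ₀ β (m + 1) / (4 * d) < ρ ρ₀ β (m + 1) / (2 * d) by gcongr; norm_num)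
  have hη : (0 : ℝ) < η := lt_trans (by positivity) hη1
  rw [div_lt_iff₀ (by positivity)] at hη1
  rw [lt_div_iff₀ (by positivity)] at hη2
  have hKpos : 0 < multK d := by unfold multK; positivity
  -- lattice points within `ρ (m+1) / 2` of the region
  obtain ⟨G, hG, hGcard⟩ := exists_lattice_finset (d := d) hη hρ.le c
  let Q := G.filter fun p => IsLat (η : ℝ) p ∧ dist p c ≤ ρ ρ₀ β m / 2 + ρ ρ₀ β (m + 1) / 2
  have hQM : (Q.card : ℝ) ≤ netM d (β m) := by
    calc (Q.card : ℝ) ≤ G.card := by exact_mod_cast Finset.card_filter_le _ _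
      _ ≤ _ := hGcard
      _ ≤ _ := by
        unfold netM
        have : 2 * ρ ρ₀ β m / η ≤ 8 * d / β m := by
          rw [div_le_div_iff₀ hη hβ]
          nlinarith
        gcongr
  have hmult : ∀ p ∈ Q, ((Q.filter fun y => dist y p < 3 * ρ ρ₀ β (m + 1)).card : ℝ) ≤
      multK d := by
    intro p _
    obtain ⟨G', hG', hG'card⟩ := exists_lattice_finset (d := d) hη
      (show 0 ≤ 3 * ρ ρ₀ β (m + 1) by positivity) p
    calc _ ≤ (G'.card : ℝ) := by
          have : (Q.filter fun y => dist y p < 3 * ρ ρ₀ β (m + 1)) ⊆ G' := by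
            intro y hy
            simp only [Q, Finset.mem_filter] at hy
            exact hG' y hy.1.2.1 hy.2.le
          exact_mod_cast Finset.card_le_card this
      _ ≤ _ := hG'card
      _ ≤ _ := by
        unfold multK
        have : 2 * (3 * ρ ρ₀ β (m + 1)) / η ≤ 24 * d := by
          rw [div_le_iff₀ hη]
          nlinarith
        gcongr
  obtain ⟨Fs, Q', h1, h2, h3, h4⟩ := exists_offers (show 0 < 3 * ρ ρ₀ β (m + 1) by positivity)
    hKpos hT t ht Q.card Q rfl hmult
  refine ⟨Fs, Q', h1, ?_, ?_, ?_⟩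
  · intro F hF
    obtain ⟨g1, g2, g3, g4⟩ := h2 F hF
    refine ⟨⟨g2, fun p hp => ?_, g3⟩, fun p hp => ?_, g4⟩
    · have := g1 hp
      simp only [Q, Finset.mem_filter] at this
      exact this.2.1.ratPt
    · have := g1 hp
      simp only [Q, Finset.mem_filter] at this
      rw [mem_ball]
      refine this.2.2.trans_lt ?_
      rw [hsucc]
      nlinarith
  · intro x hx
    obtain ⟨p, hp, hpx⟩ := exists_lattice_near hη x
    have hpx' : dist p x ≤ ρ ρ₀ β (m + 1) / 2 := by linarith
    rw [mem_closedBall] at hx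
    have hpc : dist p c ≤ ρ ρ₀ β m / 2 + ρ ρ₀ β (m + 1) / 2 := by
      linarith [dist_triangle p x c]
    have hpQ : p ∈ Q := by
      simp only [Q, Finset.mem_filter]
      refine ⟨hG p hp ?_, hp, hpc⟩
      linarith [rho_succ_le h m]
    have hxp : x ∈ closedBall p (ρ ρ₀ β (m + 1) / 2) := by rwa [mem_closedBall, dist_comm]
    rcases h3 p hpQ with h5 | ⟨F, hF, h5⟩
    · exact Or.inl ⟨p, h5, hxp⟩
    · exact Or.inr ⟨F, hF, h5 ▸ hxp⟩
  · refine h4.trans ?_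
    gcongr
    have hH := harmonic_le_one_add_log Q.card
    have hH' : ((harmonic Q.card : ℚ) : ℝ) = ∑ j ∈ Finset.range Q.card, ((j : ℝ) + 1)⁻¹ := by
      simp [harmonic]
    rw [← hH']
    refine hH.trans ?_
    gcongr 1 + ?_
    rcases Nat.eq_zero_or_pos Q.card with h0 | h0
    · rw [h0]
      simp only [Nat.cast_zero, Real.log_zero]
      refine Real.log_nonneg ?_
      unfold netM
      refine one_le_pow₀ ?_
      have : 0 ≤ 8 * (d : ℝ) / β m := by positivity
      linarith
    · exact Real.log_le_log (by exact_mod_cast h0) hQM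

end HDGame

/-! ### Choice of the parameters -/

namespace HDGame

variable {d : ℕ} {ρ₀ : ℝ} {β : ℕ → ℝ}

/-- A power of `b` beats the logarithm in the harmonic bound as `b → 0`. -/
lemma eventually_log_bound (hd : 1 ≤ d) {κ ε : ℝ} (hκ : 0 < κ) (hε : 0 < ε) :
    ∀ᶠ b in 𝓝[>] (0 : ℝ), b ^ κ * (1 + Real.log (netM d b)) < ε := by
  have hd' : (1 : ℝ) ≤ d := by exact_mod_cast hd
  have hlim : Tendsto (fun b : ℝ => b ^ κ * (1 + d * Real.log (9 * d)) -
      d * (Real.log b * b ^ κ)) (𝓝[>] 0) (𝓝 0) := by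
    have h1 : Tendsto (fun b : ℝ => b ^ κ) (𝓝[>] 0) (𝓝 0) := by
      have := (Real.continuousAt_rpow_const 0 κ (Or.inr hκ.le)).tendsto
      rw [Real.zero_rpow hκ.ne'] at this
      exact this.mono_left nhdsWithin_le_nhds
    simpa using (h1.mul_const (1 + d * Real.log (9 * d))).sub
      ((tendsto_log_mul_rpow_nhdsGT_zero hκ).const_mul (d : ℝ))
  filter_upwards [hlim.eventually (gt_mem_nhds hε), self_mem_nhdsWithin,
    mem_nhdsWithin_of_mem_nhds (gt_mem_nhds (show (0 : ℝ) < 1 by norm_num))] with b hb hb0 hb1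
  have hb0' : 0 < b := hb0
  refine lt_of_le_of_lt ?_ hb
  have hle : 8 * (d : ℝ) / b + 1 ≤ 9 * d / b := by
    rw [div_add_one hb0'.ne']
    gcongr
    linarith
  have hlog : Real.log (netM d b) ≤ d * (Real.log (9 * d) - Real.log b) := by
    unfold netM
    rw [Real.log_pow, ← Real.log_div (by positivity) hb0'.ne']
    gcongr
  have hbk : 0 < b ^ κ := Real.rpow_pos_of_pos hb0' κ
  nlinarith

/-- The exponent `θ`, the bound `g m` for the digits admitted in round `m + 1`, and the round
`n₀` from which on the estimates for one round hold. The first estimate makes the contributions of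
successive rounds decrease geometrically, the second one bounds the contribution of one round. -/
lemma exists_params (h : Params d ρ₀ β) {δ s : ℝ} (hδ : 0 < δ) (hs : δ < s) :
    ∃ (θ : ℝ) (g : ℕ → ℕ) (n₀ : ℕ) (A : ℝ), 0 < A ∧ Tendsto g atTop atTop ∧ ∀ m ≥ n₀,
      β m < 1 / 3 ∧
      ((g m : ℝ) + 1) * (multK d * (1 + Real.log (netM d (β m)))) *
        (∏ i ∈ Finset.range (m + 2), β i) ^ θ ≤ (∏ i ∈ Finset.range (m + 1), β i) ^ θ / 2 ∧
      ((g m : ℝ) + 1) * (multK d * (ρ ρ₀ β (m + 1) ^ s /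
        ∏ i ∈ Finset.range (m + 2), β i ^ δ)) ≤ A * (∏ i ∈ Finset.range (m + 1), β i) ^ θ := by
  obtain ⟨θ, hθ⟩ : ∃ θ, θ = (s - δ) / 4 := ⟨_, rfl⟩
  have hθ0 : 0 < θ := by rw [hθ]; linarith
  have hK : 0 < multK d := by unfold multK; positivity
  have hβ' : Tendsto β atTop (𝓝[>] 0) :=
    tendsto_nhdsWithin_iff.2 ⟨h.hβlim, Eventually.of_forall h.hβpos⟩
  have hβs : Tendsto (fun m => β (m + 1)) atTop (𝓝[>] 0) :=
    hβ'.comp (tendsto_add_atTop_nat 1)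
  have hg : Tendsto (fun m => ⌊(β (m + 1))⁻¹ ^ (θ / 2)⌋₊) atTop atTop :=
    tendsto_nat_floor_atTop.comp
      ((tendsto_rpow_atTop (half_pos hθ0)).comp (tendsto_inv_nhdsGT_zero.comp hβs))
  obtain ⟨η, hη⟩ : ∃ η, η = 2 * θ / (θ / 2 + δ) := ⟨_, rfl⟩
  have hη0 : 0 < η := by rw [hη]; positivity
  obtain ⟨n₁, hn₁⟩ := h.hβslow η hη0
  have hev : ∀ᶠ m in atTop, β m < 1 / 3 ∧
      β (m + 1) ^ (3 * θ / 2) * (1 + Real.log (netM d (β (m + 1)))) < 1 / (4 * multK d) ∧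
      n₁ ≤ m + 1 := by
    refine (h.hβlim.eventually (gt_mem_nhds (by norm_num))).and
      ((hβs.eventually (eventually_log_bound h.hd (by positivity) (by positivity))).and ?_)
    filter_upwards [eventually_ge_atTop n₁] with m hm
    omega
  obtain ⟨n₀, hn₀⟩ := eventually_atTop.1 hev
  refine ⟨2 * θ, _, n₀, 2 * multK d * ρ₀ ^ s, ?_, hg, fun m hm => ?_⟩
  · have := Real.rpow_pos_of_pos h.hρ₀ s
    positivity
  obtain ⟨h1, h2, h3⟩ := hn₀ m hm
  refine ⟨h1, ?_⟩
  obtain ⟨b, hb⟩ : ∃ b, b = β (m + 1) := ⟨_, rfl⟩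
  obtain ⟨P, hP⟩ : ∃ P, P = ∏ i ∈ Finset.range (m + 1), β i := ⟨_, rfl⟩
  have hP0 : 0 < P := hP ▸ prod_pos h _
  have hb0 : 0 < b := hb ▸ h.hβpos _
  have hb1 : b < 1 := by rw [hb]; linarith [h.hβhalf (m + 1)]
  have hbm : b ≤ β m := hb ▸ h.hβmono m
  have hPs : ∏ i ∈ Finset.range (m + 2), β i = P * b := by
    rw [Finset.prod_range_succ, ← hP, hb]
  have hPd : ∏ i ∈ Finset.range (m + 2), β i ^ δ = P ^ δ * b ^ δ := by
    rw [Real.finsetProd_rpow _ _ (fun i _ => (h.hβpos i).le), hPs, Real.mul_rpow hP0.le hb0.le]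
  have hPη : P ^ η ≤ b := by
    have := hn₁ (m + 1) h3
    rwa [Real.finsetProd_rpow _ _ (fun i _ => (h.hβpos i).le), ← hP, ← hb] at this
  have hgb : ((⌊(β (m + 1))⁻¹ ^ (θ / 2)⌋₊ : ℕ) : ℝ) + 1 ≤ 2 * b ^ (-(θ / 2)) := by
    rw [← hb, Real.inv_rpow hb0.le, ← Real.rpow_neg hb0.le]
    have e1 := Nat.floor_le (Real.rpow_nonneg hb0.le (-(θ / 2)))
    have e2 : 1 ≤ b ^ (-(θ / 2)) :=
      Real.one_le_rpow_of_pos_of_le_one_of_nonpos hb0 hb1.le (by linarith)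
    linarith
  rw [hPs, hPd, ← hP]
  constructor
  · have hlog : Real.log (netM d (β m)) ≤ Real.log (netM d b) := by
      have := h.hβpos m
      unfold netM
      gcongr
    have hlog0 : 0 ≤ Real.log (netM d (β m)) := by
      have := h.hβpos m
      refine Real.log_nonneg (one_le_pow₀ ?_)
      have : 0 ≤ 8 * (d : ℝ) / β m := by positivity
      linarith
    have hPθ : 0 < P ^ (2 * θ) := Real.rpow_pos_of_pos hP0 _
    have hbp : b ^ (-(θ / 2)) * b ^ (2 * θ) = b ^ (3 * θ / 2) := by
      rw [← Real.rpow_add hb0]; congr 1; ring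
    rw [← hb, lt_div_iff₀ (by positivity)] at h2
    rw [Real.mul_rpow hP0.le hb0.le]
    calc _ ≤ (2 * b ^ (-(θ / 2))) * (multK d * (1 + Real.log (netM d b))) *
          (P ^ (2 * θ) * b ^ (2 * θ)) := by gcongr
      _ = (b ^ (-(θ / 2)) * b ^ (2 * θ) * (1 + Real.log (netM d b)) * (4 * multK d)) *
          P ^ (2 * θ) / 2 := by ring
      _ ≤ 1 * P ^ (2 * θ) / 2 := by rw [hbp]; gcongr
      _ = _ := by ring
  · have hρ : ρ ρ₀ β (m + 1) ^ s = P ^ s * ρ₀ ^ s := by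
      rw [ρ, ← hP, Real.mul_rpow hP0.le h.hρ₀.le]
    have hr : 0 < ρ₀ ^ s := Real.rpow_pos_of_pos h.hρ₀ s
    have hbP : b ^ (-(θ / 2 + δ)) ≤ P ^ (-(2 * θ)) := by
      calc b ^ (-(θ / 2 + δ)) ≤ (P ^ η) ^ (-(θ / 2 + δ)) :=
            Real.rpow_le_rpow_of_nonpos (Real.rpow_pos_of_pos hP0 _) hPη (by linarith)
        _ = P ^ (-(2 * θ)) := by
            rw [← Real.rpow_mul hP0.le, hη]
            congr 1
            field_simp
    have e1 : P ^ s / (P ^ δ * b ^ δ) = P ^ (s - δ) * b ^ (-δ) := by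
      rw [Real.rpow_sub hP0, Real.rpow_neg hb0.le]
      have := Real.rpow_pos_of_pos hP0 δ
      have := Real.rpow_pos_of_pos hb0 δ
      field_simp
    have e2 : b ^ (-(θ / 2)) * b ^ (-δ) = b ^ (-(θ / 2 + δ)) := by
      rw [← Real.rpow_add hb0]; congr 1; ring
    have e3 : P ^ (s - δ) * P ^ (-(2 * θ)) = P ^ (2 * θ) := by
      rw [← Real.rpow_add hP0]; congr 1; rw [hθ]; ring
    have hPs0 := Real.rpow_pos_of_pos hP0 (s - δ)
    rw [hρ]
    calc _ ≤ (2 * b ^ (-(θ / 2))) * (multK d * (P ^ s * ρ₀ ^ s / (P ^ δ * b ^ δ))) := by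
          gcongr
      _ = 2 * multK d * ρ₀ ^ s * (b ^ (-(θ / 2)) * (P ^ s / (P ^ δ * b ^ δ))) := by ring
      _ = 2 * multK d * ρ₀ ^ s * (P ^ (s - δ) * b ^ (-(θ / 2 + δ))) := by
          rw [e1, ← e2]; ring
      _ ≤ 2 * multK d * ρ₀ ^ s * (P ^ (s - δ) * P ^ (-(2 * θ))) := by gcongr
      _ = _ := by rw [e3]

end HDGame

/-! ### The tree of positions explored by player I -/

namespace HDGame

variable {d : ℕ} {ρ₀ : ℝ} {β : ℕ → ℝ}

/-- Finite positions of the unfolded game, as lists of completed rounds. -/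
abbrev UPos (d : ℕ) := List ((Finset (Euc d) × Option ℕ) × Euc d)

/-- The last point played by player II (`0` at the start). -/
def center (L : UPos d) : Euc d := (L.getLast?.map Prod.snd).getD 0

/-- The product of the sizes of the sets played by player I. -/
def vol (L : UPos d) : ℝ := (L.map fun e => (e.1.1.card : ℝ)).prod

lemma center_append (L : UPos d) (e) : center (L ++ [e]) = e.2 := by simp [center]

lemma vol_append (L : UPos d) (e) : vol (L ++ [e]) = vol L * e.1.1.card := by simp [vol]

lemma vol_nonneg (L : UPos d) : 0 ≤ vol L :=
  List.prod_nonneg fun a ha => by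
    obtain ⟨e, _, rfl⟩ := List.mem_map.1 ha
    positivity

/-- The options (no digit, or a digit below `g m`) that player I considers in round `m + 1`. -/
def opts (g : ℕ → ℕ) (m : ℕ) : Finset (Option ℕ) := Finset.insertNone (Finset.range (g m))

/-- Player I explores, for every admitted option, the finitely many offers of `exists_step` with
the threshold that keeps the ratio in rule (4) at most `1 / c`. A point of the region of a
position is lost if it is close to an exceptional point of some explored descendant. The lost
points have small content, and a point which is not lost can be followed forever, whatever admitted
digits are to be played. -/
theorem exists_lost (h : Params d ρ₀ β) {δ s θ A c : ℝ} {g : ℕ → ℕ} {n₀ : ℕ} (hs : 0 < s)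
    (hA : 0 < A) (hc : 0 < c)
    (hpar : ∀ m ≥ n₀, β m < 1 / 3 ∧
      ((g m : ℝ) + 1) * (multK d * (1 + Real.log (netM d (β m)))) *
        (∏ i ∈ Finset.range (m + 2), β i) ^ θ ≤ (∏ i ∈ Finset.range (m + 1), β i) ^ θ / 2 ∧
      ((g m : ℝ) + 1) * (multK d * (ρ ρ₀ β (m + 1) ^ s /
        ∏ i ∈ Finset.range (m + 2), β i ^ δ)) ≤ A * (∏ i ∈ Finset.range (m + 1), β i) ^ θ)
    (σ : UStratII d) (hσ : ∀ L F o, F.Nonempty → σ L (F, o) ∈ F) :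
    ∃ Lost : UPos d → Set (Euc d),
      (∀ m ≥ n₀, ∀ L : UPos d, L.length = m + 1 → ∀ o ∈ opts g m,
        ∀ x ∈ closedBall (center L) (ρ ρ₀ β m / 2), x ∉ Lost L →
        ∃ F : Finset (Euc d), LegalSet ρ₀ β (m + 1) F ∧
          (∀ p ∈ F, p ∈ ball (center L) ((1 - β m) * ρ ρ₀ β m)) ∧
          c / (vol L * ∏ i ∈ Finset.range (m + 2), β i ^ δ) ≤ F.card ∧
          x ∈ closedBall (σ L (F, o)) (ρ ρ₀ β (m + 1) / 2) ∧
          x ∉ Lost (L ++ [((F, o), σ L (F, o))])) ∧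
      (∀ m ≥ n₀, ∀ L : UPos d, L.length = m + 1 → content h hs (Lost L) ≤
        ENNReal.ofReal (2 * (c * A * (∏ i ∈ Finset.range (m + 1), β i) ^ θ / vol L))) := by
  classical
  have hD : ∀ n, 0 < ∏ i ∈ Finset.range n, β i ^ δ := fun n =>
    Finset.prod_pos fun i _ => Real.rpow_pos_of_pos (h.hβpos i) δ
  have hstep : ∀ (L : UPos d) (o : Option ℕ), ∃ (Fs : Finset (Finset (Euc d)))
      (Q' : Finset (Euc d)), ∀ m ≥ n₀, L.length = m + 1 →
      (Q'.card : ℝ) ≤ multK d * (c / (vol L * ∏ i ∈ Finset.range (m + 2), β i ^ δ)) ∧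
      (∀ F ∈ Fs, LegalSet ρ₀ β (m + 1) F ∧
        (∀ p ∈ F, p ∈ ball (center L) ((1 - β m) * ρ ρ₀ β m)) ∧
        c / (vol L * ∏ i ∈ Finset.range (m + 2), β i ^ δ) ≤ F.card) ∧
      (∀ x ∈ closedBall (center L) (ρ ρ₀ β m / 2),
        (∃ p ∈ Q', x ∈ closedBall p (ρ ρ₀ β (m + 1) / 2)) ∨
        ∃ F ∈ Fs, x ∈ closedBall (σ L (F, o)) (ρ ρ₀ β (m + 1) / 2)) ∧
      ∑ F ∈ Fs, ((F.card : ℝ))⁻¹ ≤ multK d * (1 + Real.log (netM d (β m))) := by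
    intro L o
    by_cases hL : n₀ ≤ L.length - 1 ∧ L.length - 1 + 1 = L.length
    · obtain ⟨Fs, Q', hst⟩ := exists_step h (hpar _ hL.1).1 (center L)
        (show 0 ≤ c / (vol L * ∏ i ∈ Finset.range (L.length - 1 + 2), β i ^ δ) from
          div_nonneg hc.le (mul_nonneg (vol_nonneg L) (hD _).le))
        (fun F => σ L (F, o)) (fun F hF => hσ L F o hF)
      refine ⟨Fs, Q', fun m hm hLm => ?_⟩
      have : L.length - 1 = m := by omega
      rw [this] at hst
      exact hst
    · refine ⟨∅, ∅, fun m hm hLm => absurd ?_ hL⟩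
      omega
  choose Fs Q' hFs using hstep
  -- `New N L`: the points close to an exceptional point exactly `N` rounds after `L`
  let New : ℕ → UPos d → Set (Euc d) := fun N => Nat.rec
    (fun L => ⋃ o ∈ opts g (L.length - 1), ⋃ p ∈ Q' L o, closedBall p (ρ ρ₀ β L.length / 2))
    (fun _ ih L => ⋃ o ∈ opts g (L.length - 1), ⋃ F ∈ Fs L o, ih (L ++ [((F, o), σ L (F, o))])) N
  have hNew0 : ∀ L, New 0 L = ⋃ o ∈ opts g (L.length - 1), ⋃ p ∈ Q' L o,
      closedBall p (ρ ρ₀ β L.length / 2) := fun L => rfl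
  have hNewS : ∀ N L, New (N + 1) L = ⋃ o ∈ opts g (L.length - 1), ⋃ F ∈ Fs L o,
      New N (L ++ [((F, o), σ L (F, o))]) := fun N L => rfl
  have hPpos : ∀ n, 0 < (∏ i ∈ Finset.range n, β i) ^ θ := fun n =>
    Real.rpow_pos_of_pos (prod_pos h n) θ
  have hcard : ∀ m, ((opts g m).card : ℝ) = g m + 1 := fun m => by
    simp [opts, Finset.card_insertNone]
  have hcont : ∀ (N m : ℕ), m ≥ n₀ → ∀ L : UPos d, L.length = m + 1 →
      content h hs (New N L) ≤ ENNReal.ofReal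
        (c * A * (∏ i ∈ Finset.range (m + 1), β i) ^ θ / vol L * (1 / 2) ^ N) := by
    intro N
    induction N with
    | zero =>
      intro m hm L hL
      rw [hNew0, hL, Nat.add_sub_cancel]
      obtain ⟨_, _, hp3⟩ := hpar m hm
      have hρs : 0 ≤ ρ ρ₀ β (m + 1) ^ s := Real.rpow_nonneg (rho_pos h _).le s
      calc _ ≤ ∑ o ∈ opts g m, ∑ p ∈ Q' L o,
            content h hs (closedBall p (ρ ρ₀ β (m + 1) / 2)) :=
            (measure_biUnion_finset_le _ _).trans
              (Finset.sum_le_sum fun o _ => measure_biUnion_finset_le _ _)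
        _ ≤ ∑ o ∈ opts g m, ∑ p ∈ Q' L o, ENNReal.ofReal (ρ ρ₀ β (m + 1) ^ s) :=
            Finset.sum_le_sum fun o _ => Finset.sum_le_sum fun p _ =>
              content_ball_le h hs p (by omega)
        _ = ENNReal.ofReal (∑ o ∈ opts g m, ∑ p ∈ Q' L o, ρ ρ₀ β (m + 1) ^ s) := by
            rw [ENNReal.ofReal_sum_of_nonneg fun o _ => Finset.sum_nonneg fun _ _ => hρs]
            refine Finset.sum_congr rfl fun o _ => ?_
            rw [ENNReal.ofReal_sum_of_nonneg fun _ _ => hρs]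
        _ ≤ _ := by
            refine ENNReal.ofReal_le_ofReal ?_
            calc _ ≤ ∑ o ∈ opts g m, multK d *
                  (c / (vol L * ∏ i ∈ Finset.range (m + 2), β i ^ δ)) * ρ ρ₀ β (m + 1) ^ s := by
                  refine Finset.sum_le_sum fun o _ => ?_
                  rw [Finset.sum_const, nsmul_eq_mul]
                  gcongr
                  exact (hFs L o m hm hL).1
              _ = c / vol L * (((g m : ℝ) + 1) * (multK d * (ρ ρ₀ β (m + 1) ^ s /
                    ∏ i ∈ Finset.range (m + 2), β i ^ δ))) := by
                  rw [Finset.sum_const, nsmul_eq_mul, hcard]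
                  field_simp
              _ ≤ c / vol L * (A * (∏ i ∈ Finset.range (m + 1), β i) ^ θ) := by
                  have := vol_nonneg L
                  gcongr
              _ = _ := by ring
    | succ N ih =>
      intro m hm L hL
      rw [hNewS, hL, Nat.add_sub_cancel]
      obtain ⟨_, hp2, _⟩ := hpar m hm
      have hvol := vol_nonneg L
      have hP2 := hPpos (m + 2)
      have hnn : ∀ F : Finset (Euc d), 0 ≤ c * A * (∏ i ∈ Finset.range (m + 2), β i) ^ θ /
          (vol L * F.card) * (1 / 2) ^ N := fun F => by positivity
      calc _ ≤ ∑ o ∈ opts g m, ∑ F ∈ Fs L o,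
            content h hs (New N (L ++ [((F, o), σ L (F, o))])) :=
            (measure_biUnion_finset_le _ _).trans
              (Finset.sum_le_sum fun o _ => measure_biUnion_finset_le _ _)
        _ ≤ ∑ o ∈ opts g m, ∑ F ∈ Fs L o, ENNReal.ofReal
              (c * A * (∏ i ∈ Finset.range (m + 2), β i) ^ θ / (vol L * F.card) *
                (1 / 2) ^ N) := by
            refine Finset.sum_le_sum fun o _ => Finset.sum_le_sum fun F _ => ?_
            have := ih (m + 1) (by omega) (L ++ [((F, o), σ L (F, o))]) (by simp [hL])
            rwa [vol_append] at this
        _ = ENNReal.ofReal (∑ o ∈ opts g m, ∑ F ∈ Fs L o,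
              c * A * (∏ i ∈ Finset.range (m + 2), β i) ^ θ / (vol L * F.card) *
                (1 / 2) ^ N) := by
            rw [ENNReal.ofReal_sum_of_nonneg fun o _ => Finset.sum_nonneg fun F _ => hnn F]
            refine Finset.sum_congr rfl fun o _ => ?_
            rw [ENNReal.ofReal_sum_of_nonneg fun F _ => hnn F]
        _ ≤ _ := by
            refine ENNReal.ofReal_le_ofReal ?_
            calc _ = ∑ o ∈ opts g m, c * A * (∏ i ∈ Finset.range (m + 2), β i) ^ θ / vol L *
                  (1 / 2) ^ N * ∑ F ∈ Fs L o, ((F.card : ℝ))⁻¹ := by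
                  refine Finset.sum_congr rfl fun o _ => ?_
                  rw [Finset.mul_sum]
                  refine Finset.sum_congr rfl fun F _ => ?_
                  rw [div_mul_eq_div_mul_one_div]
                  ring
              _ ≤ ∑ o ∈ opts g m, c * A * (∏ i ∈ Finset.range (m + 2), β i) ^ θ / vol L *
                  (1 / 2) ^ N * (multK d * (1 + Real.log (netM d (β m)))) := by
                  refine Finset.sum_le_sum fun o _ => ?_
                  gcongr
                  exact (hFs L o m hm hL).2.2.2
              _ = c * A / vol L * (1 / 2) ^ N * (((g m : ℝ) + 1) *
                  (multK d * (1 + Real.log (netM d (β m)))) *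
                    (∏ i ∈ Finset.range (m + 2), β i) ^ θ) := by
                  rw [Finset.sum_const, nsmul_eq_mul, hcard]
                  ring
              _ ≤ c * A / vol L * (1 / 2) ^ N *
                  ((∏ i ∈ Finset.range (m + 1), β i) ^ θ / 2) := by gcongr
              _ = _ := by ring
  refine ⟨fun L => ⋃ N, New N L, ?_, ?_⟩
  · intro m hm L hL o ho x hx hxL
    simp only [mem_iUnion, not_exists] at hxL
    obtain ⟨_, h2, h3, _⟩ := hFs L o m hm hL
    have ho' : o ∈ opts g (L.length - 1) := by rwa [hL, Nat.add_sub_cancel]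
    rcases h3 x hx with ⟨p, hp, hxp⟩ | ⟨F, hF, hxF⟩
    · refine absurd ?_ (hxL 0)
      rw [hNew0]
      simp only [mem_iUnion]
      exact ⟨o, ho', p, hp, by rwa [hL]⟩
    · refine ⟨F, (h2 F hF).1, (h2 F hF).2.1, (h2 F hF).2.2, hxF, ?_⟩
      simp only [mem_iUnion, not_exists]
      intro N hN
      refine hxL (N + 1) ?_
      rw [hNewS]
      simp only [mem_iUnion]
      exact ⟨o, ho', F, hF, hN⟩
  · intro m hm L hL
    have hv := vol_nonneg L
    have hP1 := hPpos (m + 1)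
    have hnn : 0 ≤ c * A * (∏ i ∈ Finset.range (m + 1), β i) ^ θ / vol L := by positivity
    have hsumm : HasSum (fun N : ℕ => c * A * (∏ i ∈ Finset.range (m + 1), β i) ^ θ / vol L *
        (1 / 2) ^ N) (c * A * (∏ i ∈ Finset.range (m + 1), β i) ^ θ / vol L * 2) :=
      hasSum_geometric_two.mul_left _
    calc _ ≤ ∑' N, content h hs (New N L) := measure_iUnion_le _
      _ ≤ ∑' N : ℕ, ENNReal.ofReal
          (c * A * (∏ i ∈ Finset.range (m + 1), β i) ^ θ / vol L * (1 / 2) ^ N) :=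
          ENNReal.tsum_le_tsum fun N => hcont N m hm L hL
      _ = _ := by
          rw [← ENNReal.ofReal_tsum_of_nonneg (fun N => by positivity) hsumm.summable,
            hsumm.tsum_eq, mul_comm]

end HDGame

/-! ### Runs built from unlost points -/

namespace HDGame

variable {d : ℕ} {ρ₀ : ℝ} {β : ℕ → ℝ}

lemma uhist_succ (F : ℕ → Finset (Euc d)) (g : ℕ → Option ℕ) (x : ℕ → Euc d) (n : ℕ) :
    uhist F g x (n + 1) = uhist F g x n ++ [((F n, g n), x n)] := by
  unfold uhist
  rw [List.ofFn_succ', List.concat_eq_append]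
  rfl

lemma uhist_length (F : ℕ → Finset (Euc d)) (g : ℕ → Option ℕ) (x : ℕ → Euc d) (n : ℕ) :
    (uhist F g x n).length = n := by simp [uhist]

lemma vol_uhist (F : ℕ → Finset (Euc d)) (g : ℕ → Option ℕ) (x : ℕ → Euc d) (n : ℕ) :
    vol (uhist F g x n) = ∏ i ∈ Finset.range n, ((F i).card : ℝ) := by
  induction n with
  | zero => simp [uhist, vol]
  | succ n ih => rw [uhist_succ, vol_append, ih, Finset.prod_range_succ]

/-- The number of digits played along a position. -/
def digits (L : UPos d) : ℕ := L.countP fun e => e.1.2.isSome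

lemma digits_uhist (F : ℕ → Finset (Euc d)) (g : ℕ → Option ℕ) (x : ℕ → Euc d) (n : ℕ) :
    digits (uhist F g x n) = Nat.count (fun i => (g i).isSome = true) n := by
  induction n with
  | zero => simp [uhist, digits]
  | succ n ih =>
    rw [Nat.count_succ, ← ih, uhist_succ]
    simp [digits, List.countP_append, List.countP_cons]

/-- If every position satisfying `Inv` has a move of player I satisfying `St` which, answered by
`σ`, leads to a position satisfying `Inv`, then these moves can be chained into a run. -/
lemma exists_run (σ : UStratII d) {Inv : UPos d → Prop}
    {St : UPos d → Finset (Euc d) → Option ℕ → Prop} (h0 : Inv [])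
    (hst : ∀ L, Inv L → ∃ F o, St L F o ∧ Inv (L ++ [((F, o), σ L (F, o))])) :
    ∃ F g x, UConsistentII σ F g x ∧
      ∀ n, Inv (uhist F g x n) ∧ St (uhist F g x n) (F n) (g n) := by
  choose! f o hfo using hst
  let Ls : ℕ → UPos d := fun n =>
    Nat.rec [] (fun _ L => L ++ [((f L, o L), σ L (f L, o L))]) n
  have hs : ∀ n, Ls (n + 1) = Ls n ++ [((f (Ls n), o (Ls n)), σ (Ls n) (f (Ls n), o (Ls n)))] :=
    fun n => rfl
  have hInv : ∀ n, Inv (Ls n) := by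
    intro n
    induction n with
    | zero => exact h0
    | succ n ih => rw [hs]; exact (hfo _ ih).2
  have hu : ∀ n, uhist (fun n => f (Ls n)) (fun n => o (Ls n))
      (fun n => σ (Ls n) (f (Ls n), o (Ls n))) n = Ls n := by
    intro n
    induction n with
    | zero => simp [uhist, Ls]
    | succ n ih => rw [uhist_succ, ih, hs]
  refine ⟨fun n => f (Ls n), fun n => o (Ls n), fun n => σ (Ls n) (f (Ls n), o (Ls n)),
    fun n => ?_, fun n => ?_⟩
  · rw [hu]
  · rw [hu]
    exact ⟨hInv n, (hfo _ (hInv n)).1⟩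

/-- A strategy that follows `τ` whenever `τ` plays inside the offered set. -/
def correct (τ : UStratII d) : UStratII d := by
  classical
  exact fun L m => if τ L m ∈ m.1 then τ L m else if h : m.1.Nonempty then h.choose else 0

lemma correct_eq {τ : UStratII d} {L m} (h : τ L m ∈ m.1) : correct τ L m = τ L m := by
  simp [correct, h]

lemma correct_mem (τ : UStratII d) (L : UPos d) (F : Finset (Euc d)) (o : Option ℕ)
    (hF : F.Nonempty) : correct τ L (F, o) ∈ F := by
  unfold correct
  split_ifs with h1
  · exact h1
  · exact hF.choose_spec

/-- Against a player I who obeys rules (1)–(3), a winning `τ` plays inside the offered sets, so the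
corrected strategy produces runs of `τ`. -/
lemma consistent_of_correct {δ : ℝ} {R : Set (Euc d × (ℕ → ℕ))} {τ : UStratII d}
    (hτ : UWinsII ρ₀ β δ R τ) {F : ℕ → Finset (Euc d)} {g : ℕ → Option ℕ} {x : ℕ → Euc d}
    (hx : UConsistentII (correct τ) F g x) (hl : ∀ n, LegalThrough ρ₀ β F x n) :
    UConsistentII τ F g x := by
  obtain ⟨F', g', x', hc, hFg⟩ := exists_run τ (Inv := fun _ => True)
    (St := fun L F₀ o => F₀ = F L.length ∧ o = g L.length) trivial
    (fun L _ => ⟨_, _, ⟨rfl, rfl⟩, trivial⟩)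
  simp only [uhist_length, true_and] at hFg
  obtain rfl : F' = F := funext fun n => (hFg n).1
  obtain rfl : g' = g := funext fun n => (hFg n).2
  have hxx : ∀ n, x n = x' n := by
    intro n
    induction n using Nat.strong_induction_on with
    | _ n ih =>
      have hu : uhist F' g' x n = uhist F' g' x' n := by
        unfold uhist
        congr 1
        funext i
        rw [ih i i.2]
      have hmem : x' n ∈ F' n := (hτ F' g' x' hc).1 n
        ⟨(hl n).1, fun i hi p hp => by rw [← ih i hi]; exact (hl n).2 i hi p hp⟩
      rw [hx n, hu, correct_eq, ← hc n]
      rw [← hc n]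
      exact hmem
  obtain rfl : x = x' := funext hxx
  exact hc

/-- If the next digit of `y` is played as soon as it is below a bound tending to infinity, then
eventually every digit of `y` is played. -/
lemma matches_of_bound {o : ℕ → Option ℕ} {y G : ℕ → ℕ} (hG : Tendsto G atTop atTop)
    (ho : ∀ n, o n = if y (Nat.count (fun i => (o i).isSome = true) n) < G n then
      some (y (Nat.count (fun i => (o i).isSome = true) n)) else none) :
    Matches o y := by
  have hval : ∀ n, (o n).isSome = true →
      o n = some (y (Nat.count (fun i => (o i).isSome = true) n)) := by
    intro n hn
    have := ho n
    split_ifs at this with h1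
    · exact this
    · simp [this] at hn
  have hinf : {i | (o i).isSome = true}.Infinite := by
    intro hfin
    obtain ⟨N, hN⟩ := hfin.bddAbove
    have hno : ∀ n ≥ N + 1, o n = none := by
      intro n hn
      by_contra hne
      have := hN (show n ∈ {i | (o i).isSome = true} from
        Option.isSome_iff_ne_none.2 hne)
      omega
    have hcount : ∀ n ≥ N + 1, Nat.count (fun i => (o i).isSome = true) n =
        Nat.count (fun i => (o i).isSome = true) (N + 1) := by
      intro n hn
      induction n, hn using Nat.le_induction with
      | base => rfl
      | succ n hn ih => rw [Nat.count_succ, ih, hno n hn]; simp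
    obtain ⟨n, hn1, hn2⟩ := ((hG.eventually_gt_atTop
      (y (Nat.count (fun i => (o i).isSome = true) (N + 1)))).and
      (eventually_ge_atTop (N + 1))).exists
    have := ho n
    rw [hcount n hn2, if_pos hn1, hno n hn2] at this
    simp at this
  refine ⟨Nat.nth fun i => (o i).isSome = true, Nat.nth_strictMono hinf, fun n => ?_, fun j => ?_⟩
  · have := Nat.range_nth_of_infinite hinf
    constructor
    · intro hn
      have : n ∈ Set.range (Nat.nth fun i => (o i).isSome = true) := by rw [this]; exact hn
      exact this
    · rintro ⟨j, rfl⟩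
      exact Nat.nth_mem_of_infinite hinf j
  · rw [hval _ (Nat.nth_mem_of_infinite hinf j), Nat.count_nth_of_infinite hinf]

end HDGame

namespace HDGame

variable {d : ℕ} {ρ₀ : ℝ} {β : ℕ → ℝ}

/-- The position in which the single point `q` has been offered, without digits, for `n` rounds. -/
def constPos (q : Euc d) (n : ℕ) : UPos d := List.replicate n (({q}, none), q)

lemma constPos_succ (q : Euc d) (n : ℕ) :
    constPos q (n + 1) = constPos q n ++ [(({q}, none), q)] := by
  simp [constPos, List.replicate_succ']

lemma vol_constPos (q : Euc d) (n : ℕ) : vol (constPos q n) = 1 := by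
  simp [constPos, vol]

lemma center_constPos (q : Euc d) (n : ℕ) : center (constPos q (n + 1)) = q := by
  rw [constPos_succ, center_append]

/-- Near a rational point `q`, the projection of `R` lies in the set of points lost after the
constant position at `q`: an unlost point with a witness `y` would let player I beat `τ`, by
following the point and playing each digit of `y` as soon as it is admitted. -/
lemma proj_subset_lost (h : Params d ρ₀ β) {δ c : ℝ} {g : ℕ → ℕ} {n₀ : ℕ} (hc : 0 < c)
    (hg : Tendsto g atTop atTop) {R : Set (Euc d × (ℕ → ℕ))} {τ : UStratII d}
    (hτ : UWinsII ρ₀ β δ R τ) {Lost : UPos d → Set (Euc d)}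
    (hLost : ∀ m ≥ n₀, ∀ L : UPos d, L.length = m + 1 → ∀ o ∈ opts g m,
        ∀ x ∈ closedBall (center L) (ρ ρ₀ β m / 2), x ∉ Lost L →
        ∃ F : Finset (Euc d), LegalSet ρ₀ β (m + 1) F ∧
          (∀ p ∈ F, p ∈ ball (center L) ((1 - β m) * ρ ρ₀ β m)) ∧
          c / (vol L * ∏ i ∈ Finset.range (m + 2), β i ^ δ) ≤ F.card ∧
          x ∈ closedBall (correct τ L (F, o)) (ρ ρ₀ β (m + 1) / 2) ∧
          x ∉ Lost (L ++ [((F, o), correct τ L (F, o))]))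
    {q : Euc d} (hq : RatPt q) :
    {x | ∃ y, (x, y) ∈ R} ∩ closedBall q (ρ ρ₀ β n₀ / 2) ⊆ Lost (constPos q (n₀ + 1)) := by
  rintro z ⟨⟨y, hzy⟩, hzq⟩
  by_contra hz
  have hD : ∀ n, 0 < ∏ i ∈ Finset.range n, β i ^ δ := fun n =>
    Finset.prod_pos fun i _ => Real.rpow_pos_of_pos (h.hβpos i) δ
  -- no digit is admitted while the constant position is being built
  let G : ℕ → ℕ := fun n => if n ≤ n₀ then 0 else g (n - 1)
  obtain ⟨F, o, x, hcons, hrun⟩ := exists_run (correct τ)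
    (Inv := fun L => (L.length ≤ n₀ + 1 → L = constPos q L.length) ∧
      ∀ m ≥ n₀, L.length = m + 1 →
        z ∈ closedBall (center L) (ρ ρ₀ β m / 2) ∧ z ∉ Lost L)
    (St := fun L F o => o = (if y (digits L) < G L.length then some (y (digits L)) else none) ∧
      (L.length ≤ n₀ → F = {q}) ∧
      ∀ m ≥ n₀, L.length = m + 1 → LegalSet ρ₀ β (m + 1) F ∧
        (∀ p ∈ F, p ∈ ball (center L) ((1 - β m) * ρ ρ₀ β m)) ∧
        c / (vol L * ∏ i ∈ Finset.range (m + 2), β i ^ δ) ≤ F.card)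
    ⟨fun _ => by simp [constPos], fun m _ hm => by simp at hm⟩
    (by
      rintro L ⟨hL1, hL2⟩
      rcases le_or_gt L.length n₀ with hle | hlt
      · refine ⟨{q}, none, ⟨by simp [G, hle], fun _ => rfl, fun m hm hm' => by omega⟩, ?_⟩
        have hq' : correct τ L ({q}, none) = q := by
          simpa using correct_mem τ L {q} none (by simp)
        have hL' : L ++ [(({q}, none), correct τ L ({q}, none))] = constPos q (L.length + 1) := by
          rw [hq', constPos_succ, ← hL1 (by omega)]
        rw [hL']
        refine ⟨fun _ => by simp [constPos], fun m hm hm' => ?_⟩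
        have hlen : L.length = m := by simpa [constPos] using hm'
        obtain rfl : m = n₀ := by omega
        rw [hlen, center_constPos]
        exact ⟨hzq, hz⟩
      · obtain ⟨m, hm⟩ : ∃ m, L.length = m + 1 := ⟨L.length - 1, by omega⟩
        have hmn : m ≥ n₀ := by omega
        obtain ⟨ob, hob⟩ : ∃ ob, ob =
          (if y (digits L) < G L.length then some (y (digits L)) else none) := ⟨_, rfl⟩
        have hmem : ob ∈ opts g m := by
          have hGm : G L.length = g m := by
            simp only [G, hm]
            rw [if_neg (by omega), Nat.add_sub_cancel]
          rw [hob, hGm]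
          unfold opts
          split_ifs with h1
          · simpa using h1
          · simp
        obtain ⟨F, hF1, hF2, hF3, hF4, hF5⟩ := hLost m hmn L hm ob hmem z
          (hL2 m hmn hm).1 (hL2 m hmn hm).2
        refine ⟨F, ob, ⟨hob, fun h' => by omega, fun m' _ hm' => ?_⟩, fun h' => ?_,
          fun m' _ hm' => ?_⟩
        · obtain rfl : m' = m := by omega
          exact ⟨hF1, hF2, hF3⟩
        · simp at h'
          omega
        · obtain rfl : m' = m + 1 := by simp at hm'; omega
          rw [center_append]
          exact ⟨hF4, hF5⟩)
  simp only [uhist_length] at hrun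
  have hcen : ∀ n, center (uhist F o x (n + 1)) = x n := fun n => by
    rw [uhist_succ, center_append]
  have hFq : ∀ n ≤ n₀, F n = {q} := fun n hn => (hrun n).2.2.1 hn
  have hxq : ∀ n ≤ n₀, x n = q := fun n hn => by
    rw [← hcen, (hrun (n + 1)).1.1 (by omega), center_constPos]
  have hlegal : ∀ i, LegalSet ρ₀ β i (F i) := by
    intro i
    rcases le_or_gt i n₀ with hi | hi
    · rw [hFq i hi]
      refine ⟨by simp, by simpa using hq, ?_⟩
      intro a ha b hb hab
      rw [Finset.mem_singleton] at ha hb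
      exact absurd (ha.trans hb.symm) hab
    · obtain ⟨m, rfl⟩ : ∃ m, i = m + 1 := ⟨i - 1, by omega⟩
      exact ((hrun (m + 1)).2.2.2 m (by omega) rfl).1
  have hball : ∀ i, ∀ p ∈ F (i + 1), p ∈ ball (x i) ((1 - β i) * ρ ρ₀ β i) := by
    intro i p hp
    rcases lt_or_ge i n₀ with hi | hi
    · rw [hFq (i + 1) hi, Finset.mem_singleton] at hp
      rw [hp, hxq i hi.le]
      exact mem_ball_self (mul_pos (by linarith [h.hβhalf i]) (rho_pos h i))
    · have := ((hrun (i + 1)).2.2.2 i hi rfl).2.1 p hp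
      rwa [hcen] at this
  have hcons' : UConsistentII τ F o x := consistent_of_correct hτ hcons fun n =>
    ⟨fun i _ => hlegal i, fun i _ => hball i⟩
  have hrules : IRules ρ₀ β δ F x := by
    refine ⟨hlegal, hball, c⁻¹, inv_pos.2 hc, ?_⟩
    filter_upwards [eventually_ge_atTop (n₀ + 2)] with n hn
    obtain ⟨m, rfl⟩ : ∃ m, n = m + 2 := ⟨n - 2, by omega⟩
    have h3 := ((hrun (m + 1)).2.2.2 m (by omega) rfl).2.2
    have hv : 0 < vol (uhist F o x (m + 1)) := by
      rw [vol_uhist]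
      exact Finset.prod_pos fun i _ => by exact_mod_cast (hlegal i).1.card_pos
    rw [div_le_iff₀ (mul_pos hv (hD _)), vol_uhist] at h3
    rw [div_eq_mul_inv, ← mul_inv]
    refine inv_anti₀ hc (h3.trans (le_of_eq ?_))
    rw [Finset.prod_range_succ (fun i => ((F i).card : ℝ)) (m + 1)]
    ring
  have hlim : Tendsto x atTop (𝓝 z) := by
    rw [tendsto_iff_dist_tendsto_zero]
    refine squeeze_zero' (Eventually.of_forall fun _ => dist_nonneg) ?_ (rho_tendsto h)
    filter_upwards [eventually_ge_atTop n₀] with n hn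
    have := ((hrun (n + 1)).1.2 n hn rfl).1
    rw [hcen, mem_closedBall, dist_comm] at this
    linarith [rho_pos h n]
  have hG : Tendsto G atTop atTop := by
    refine (hg.comp (tendsto_sub_atTop_nat 1)).congr' ?_
    filter_upwards [eventually_gt_atTop n₀] with n hn
    simp [G, not_le.2 hn]
  have hmatch : Matches o y := matches_of_bound hG fun n => by
    have := (hrun n).2.1
    rwa [digits_uhist] at this
  exact (hτ F o x hcons').2 hrules z y hlim hmatch hzy

/-- A winning strategy of player II in the unfolded `δ`-game forces the projection of `R` to have
zero `s`-dimensional content. -/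
theorem content_proj_eq_zero (h : Params d ρ₀ β) {δ s : ℝ} (hδ : 0 < δ) (hs : δ < s)
    {R : Set (Euc d × (ℕ → ℕ))} {τ : UStratII d} (hτ : UWinsII ρ₀ β δ R τ) :
    content h (hδ.trans hs) {x | ∃ y, (x, y) ∈ R} = 0 := by
  obtain ⟨θ, g, n₀, A, hA, hg, hpar⟩ := exists_params h hδ hs
  have hloc : ∀ q : Euc d, RatPt q → content h (hδ.trans hs)
      ({x | ∃ y, (x, y) ∈ R} ∩ closedBall q (ρ ρ₀ β n₀ / 2)) = 0 := by
    intro q hq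
    obtain ⟨B, hB⟩ : ∃ B, B = 2 * (A * (∏ i ∈ Finset.range (n₀ + 1), β i) ^ θ) := ⟨_, rfl⟩
    -- the threshold constant `c` of rule (4) is at player I's disposal
    have hle : ∀ c > 0, content h (hδ.trans hs)
        ({x | ∃ y, (x, y) ∈ R} ∩ closedBall q (ρ ρ₀ β n₀ / 2)) ≤ ENNReal.ofReal (c * B) := by
      intro c hc
      obtain ⟨Lost, hL1, hL2⟩ := exists_lost h (hδ.trans hs) hA hc hpar (correct τ) (correct_mem τ)
      refine (measure_mono (proj_subset_lost h hc hg hτ hL1 hq)).trans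
        ((hL2 n₀ le_rfl _ (by simp [constPos])).trans (le_of_eq ?_))
      rw [vol_constPos, hB]
      congr 1
      ring
    have ht : Tendsto (fun c : ℝ => ENNReal.ofReal (c * B)) (𝓝[>] 0) (𝓝 0) := by
      have : Tendsto (fun c : ℝ => ENNReal.ofReal (c * B)) (𝓝 0) (𝓝 (ENNReal.ofReal (0 * B))) :=
        ENNReal.tendsto_ofReal (tendsto_id.mul_const B)
      rw [zero_mul, ENNReal.ofReal_zero] at this
      exact this.mono_left nhdsWithin_le_nhds
    exact le_antisymm (ge_of_tendsto ht (eventually_mem_nhdsWithin.mono hle)) bot_le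
  have hd : (0 : ℝ) < d := by exact_mod_cast h.hd
  obtain ⟨η, hη0, hη⟩ : ∃ η : ℚ, (0 : ℝ) < η ∧ (η : ℝ) < ρ ρ₀ β n₀ / 2 / d :=
    exists_rat_btwn (div_pos (half_pos (rho_pos h n₀)) hd)
  let pt : (Fin d → ℤ) → Euc d := fun k => WithLp.toLp 2 fun j => (k j : ℝ) * η
  have hpt : ∀ k, IsLat (η : ℝ) (pt k) := fun k j => ⟨k j, rfl⟩
  refine measure_mono_null (t := ⋃ k, {x | ∃ y, (x, y) ∈ R} ∩
    closedBall (pt k) (ρ ρ₀ β n₀ / 2)) (fun z hz => ?_)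
    (measure_iUnion_null fun k => hloc _ (hpt k).ratPt)
  obtain ⟨p, hp, hpz⟩ := exists_lattice_near hη0 z
  choose k hk using hp
  have hpk : pt k = p := by
    ext j
    exact (hk j).symm
  refine mem_iUnion.2 ⟨k, hz, ?_⟩
  rw [hpk, mem_closedBall, dist_comm]
  rw [lt_div_iff₀ hd] at hη
  linarith

end HDGame


/-- **Unfolding theorem.** If player II has a winning strategy in the unfolded
`δ`-Hausdorff dimension game for `R ⊆ ℝ^d × (ℕ → ℕ)`, then for every `s` with `δ < s ≤ d`,
player II has a winning strategy in the ordinary `s`-Hausdorff dimension game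
`G^s_β̄(A)` where `A = p[R] = {x : ∃ y, (x, y) ∈ R}`. -/
theorem unfolded_to_folded {d : ℕ} {ρ₀ : ℝ} {β : ℕ → ℝ}
    (hpar : Params d ρ₀ β) {δ : ℝ} (hδ : 0 < δ) (hδd : δ ≤ (d : ℝ))
    (R : Set (Euc d × (ℕ → ℕ)))
    (τ : UStratII d) (hτ : UWinsII ρ₀ β δ R τ) :
    ∀ s : ℝ, δ < s → s ≤ (d : ℝ) →
      ∃ τ' : StratII d, WinsII ρ₀ β s {x | ∃ y, (x, y) ∈ R} τ' := by
  intro s hs _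
  exact winsII_of_content_zero hpar (hδ.trans hs) (content_proj_eq_zero hpar hδ hs hτ)
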